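/- arXiv:1808.10587 — 2 statements merged into one kernel-verified Lean document; each statement's English description precedes it below -/
import Mathlib

section
/- Under the standing hypotheses, the parametrization F(s,t) = r(s) + t·e(s) of the ruled surface satisfies, for all (s,t) ∈ I × ℝ: (∂F/∂s)(s,t) × (∂F/∂t)(s,t) = κ₁(s)·n₀(s) − (t + ⟪r'(s), e'(s)⟫)·t₀(s). -/
noncomputable section
open scoped RealInnerProductSpace

/-- Euclidean 3-space `ℝ³`. -/
abbrev E3 : Type := EuclideanSpace ℝ (Fin 3)

/-- The cross product on `E3`. -/
def cross (u v : E3) : E3 :=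
  (WithLp.equiv 2 (Fin 3 → ℝ)).symm
    ![u 1 * v 2 - u 2 * v 1, u 2 * v 0 - u 0 * v 2, u 0 * v 1 - u 1 * v 0]

/-- Determinant of the 3×3 matrix with columns `u`, `v`, `w`. -/
def det3 (u v w : E3) : ℝ :=
  Matrix.det !![u 0, v 0, w 0; u 1, v 1, w 1; u 2, v 2, w 2]

namespace Ruled

/-- The director curve `e = v₀`. -/
def e (v₀ : ℝ → E3) : ℝ → E3 := v₀

/-- The base curve `r = v₀ × v₁`. -/
def r (v₀ v₁ : ℝ → E3) : ℝ → E3 := fun s => cross (v₀ s) (v₁ s)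

/-- The parametrization `F(s,t) = r(s) + t • e(s)` of the ruled surface. -/
def F (v₀ v₁ : ℝ → E3) (s t : ℝ) : E3 := r v₀ v₁ s + t • v₀ s

/-- `n₀ = v₀'`. -/
def n₀ (v₀ : ℝ → E3) : ℝ → E3 := fun s => deriv v₀ s

/-- `κ₁ = ⟪v₀', v₁'⟫`, the ε-part of the dual curvature. -/
def κ₁ (v₀ v₁ : ℝ → E3) : ℝ → ℝ := fun s => ⟪deriv v₀ s, deriv v₁ s⟫

/-- `n₁ = v₁' - κ₁ • v₀'`. -/
def n₁ (v₀ v₁ : ℝ → E3) : ℝ → E3 := fun s => deriv v₁ s - κ₁ v₀ v₁ s • deriv v₀ s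

/-- `t₀ = v₀ × n₀`. -/
def t₀ (v₀ : ℝ → E3) : ℝ → E3 := fun s => cross (v₀ s) (n₀ v₀ s)

/-- `t₁ = v₀ × n₁ + v₁ × n₀`. -/
def t₁ (v₀ v₁ : ℝ → E3) : ℝ → E3 :=
  fun s => cross (v₀ s) (n₁ v₀ v₁ s) + cross (v₁ s) (n₀ v₀ s)

/-- `τ₀ = ⟪n₀', t₀⟫`, the real part of the dual torsion. -/
def τ₀ (v₀ : ℝ → E3) : ℝ → ℝ := fun s => ⟪deriv (n₀ v₀) s, t₀ v₀ s⟫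

/-- `τ₁ = ⟪n₀', t₁⟫ + ⟪n₁', t₀⟫`, the ε-part of the dual torsion. -/
def τ₁ (v₀ v₁ : ℝ → E3) : ℝ → ℝ :=
  fun s => ⟪deriv (n₀ v₀) s, t₁ v₀ v₁ s⟫ + ⟪deriv (n₁ v₀ v₁) s, t₀ v₀ s⟫

/-- The striction curve `σ(s) = r(s) - ⟪r'(s), e'(s)⟫ • e(s)`. -/
def strict (v₀ v₁ : ℝ → E3) : ℝ → E3 :=
  fun s => r v₀ v₁ s - ⟪deriv (r v₀ v₁) s, deriv (e v₀) s⟫ • e v₀ s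

end Ruled

open Ruled

/-! The unit tangent `q = v₀'` is orthogonal to `p = v₀`, so `p, q, p × q` is an orthonormal frame
and `p = q × (p × q)`. The `bac - cab` rule then gives `x × p = ⟪x, p × q⟫ q - ⟪x, q⟫ (p × q)` for
every `x`. For `x = ∂F/∂s = r' + t q` the second coefficient is `t + ⟪r', q⟫`, and since
`r' = q × v₁ + p × v₁'`, the Binet–Cauchy identity evaluates the first one as `⟪q, v₁'⟫ = κ₁`. -/

open Filter Topology Matrix

theorem cross_eq_toLp_crossProduct (u v : E3) :
    cross u v = WithLp.toLp 2 (u.ofLp ⨯₃ v.ofLp) := rfl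

theorem inner_eq_dotProduct {ι : Type*} [Fintype ι] (u v : EuclideanSpace ℝ ι) :
    ⟪u, v⟫ = u.ofLp ⬝ᵥ v.ofLp := by
  rw [EuclideanSpace.inner_eq_star_dotProduct, star_trivial, dotProduct_comm]

theorem isBilinearMap_cross : IsBilinearMap ℝ cross where
  add_left u v w := by simp only [cross_eq_toLp_crossProduct, WithLp.ofLp_add, map_add,
    LinearMap.add_apply, WithLp.toLp_add]
  smul_left c u v := by simp only [cross_eq_toLp_crossProduct, WithLp.ofLp_smul, map_smul,
    LinearMap.smul_apply, WithLp.toLp_smul]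
  add_right u v w := by simp only [cross_eq_toLp_crossProduct, WithLp.ofLp_add, map_add,
    WithLp.toLp_add]
  smul_right c u v := by simp only [cross_eq_toLp_crossProduct, WithLp.ofLp_smul, map_smul,
    WithLp.toLp_smul]

theorem cross_cross_right (u v w : E3) : cross u (cross v w) = ⟪u, w⟫ • v - ⟪v, u⟫ • w := by
  simp only [cross_eq_toLp_crossProduct, cross_cross_eq_smul_sub_smul', inner_eq_dotProduct,
    WithLp.toLp_sub, WithLp.toLp_smul, WithLp.toLp_ofLp]

theorem inner_cross_cross (u v w x : E3) :
    ⟪cross u v, cross w x⟫ = ⟪u, w⟫ * ⟪v, x⟫ - ⟪u, x⟫ * ⟪v, w⟫ := by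
  simp only [cross_eq_toLp_crossProduct, inner_eq_dotProduct, cross_dot_cross]

theorem inner_cross_self (u v : E3) : ⟪v, cross u v⟫ = 0 := by
  simp only [cross_eq_toLp_crossProduct, inner_eq_dotProduct, dot_cross_self]

theorem cross_eq_of_orthogonal_unit {p q : E3} (hq : ‖q‖ = 1) (hpq : ⟪p, q⟫ = 0) (x : E3) :
    cross x p = ⟪x, cross p q⟫ • q - ⟪x, q⟫ • cross p q := by
  have hp : cross q (cross p q) = p := by
    rw [cross_cross_right, hpq, inner_self_eq_one_of_norm_eq_one hq, one_smul, zero_smul, sub_zero]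
  calc cross x p = cross x (cross q (cross p q)) := by rw [hp]
    _ = ⟪x, cross p q⟫ • q - ⟪x, q⟫ • cross p q := by rw [cross_cross_right, real_inner_comm x q]

theorem hasDerivAt_cross {f g : ℝ → E3} {f' g' : E3} {s : ℝ} (hf : HasDerivAt f f' s)
    (hg : HasDerivAt g g' s) :
    HasDerivAt (fun u => cross (f u) (g u)) (cross f' (g s) + cross (f s) g') s := by
  rw [add_comm]
  exact isBilinearMap_cross.toContinuousBilinearMap.hasDerivAt_of_bilinear
    (fun _ => hf) (fun _ => hg)

theorem inner_eq_zero_of_hasDerivAt_of_norm_eventually_eq {V : Type*} [NormedAddCommGroup V]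
    [InnerProductSpace ℝ V] {f : ℝ → V} {f' : V} {s c : ℝ} (hf : HasDerivAt f f' s)
    (hc : ∀ᶠ u in 𝓝 s, ‖f u‖ = c) : ⟪f s, f'⟫ = 0 := by
  have hconst : (fun u => ‖f u‖ ^ 2) =ᶠ[𝓝 s] fun _ => c ^ 2 := hc.mono fun u hu => by simp only [hu]
  have hderiv : 2 * ⟪f s, f'⟫ = 0 :=
    hf.norm_sq.unique ((hasDerivAt_const s (c ^ 2)).congr_of_eventuallyEq hconst)
  linarith

namespace Ruled

variable {v₀ v₁ : ℝ → E3} {s : ℝ}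

theorem hasDerivAt_r (hv₀ : DifferentiableAt ℝ v₀ s) (hv₁ : DifferentiableAt ℝ v₁ s) :
    HasDerivAt (r v₀ v₁) (cross (deriv v₀ s) (v₁ s) + cross (v₀ s) (deriv v₁ s)) s :=
  hasDerivAt_cross hv₀.hasDerivAt hv₁.hasDerivAt

theorem deriv_F_left (hv₀ : DifferentiableAt ℝ v₀ s) (hv₁ : DifferentiableAt ℝ v₁ s) (t : ℝ) :
    deriv (fun u => F v₀ v₁ u t) s = deriv (r v₀ v₁) s + t • deriv v₀ s :=
  ((hasDerivAt_r hv₀ hv₁).differentiableAt.hasDerivAt.add (hv₀.hasDerivAt.const_smul t)).deriv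

theorem deriv_F_right (v₀ v₁ : ℝ → E3) (s t : ℝ) : deriv (fun u => F v₀ v₁ s u) t = v₀ s := by
  simpa only [one_smul] using!
    (((hasDerivAt_id t).smul_const (v₀ s)).const_add (r v₀ v₁ s)).deriv

theorem inner_deriv_r_t₀ (hv₀ : DifferentiableAt ℝ v₀ s) (hv₁ : DifferentiableAt ℝ v₁ s)
    (hunit : ‖v₀ s‖ = 1) (horth : ⟪v₀ s, v₁ s⟫ = 0) (hperp : ⟪v₀ s, deriv v₀ s⟫ = 0) :
    ⟪deriv (r v₀ v₁) s, t₀ v₀ s⟫ = κ₁ v₀ v₁ s := by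
  have hfirst : ⟪cross (deriv v₀ s) (v₁ s), t₀ v₀ s⟫ = 0 := by
    rw [t₀, n₀, inner_cross_cross, real_inner_comm, hperp, real_inner_comm (v₀ s) (v₁ s), horth]
    ring
  have hsecond : ⟪cross (v₀ s) (deriv v₁ s), t₀ v₀ s⟫ = κ₁ v₀ v₁ s := by
    rw [t₀, n₀, κ₁, inner_cross_cross, inner_self_eq_one_of_norm_eq_one hunit, hperp,
      real_inner_comm (deriv v₀ s) (deriv v₁ s)]
    ring
  rw [(hasDerivAt_r hv₀ hv₁).deriv, inner_add_left, hfirst, hsecond, zero_add]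

end Ruled

theorem cross_of_partials_general {v₀ v₁ : ℝ → E3} {s : ℝ}
    (hv₀ : DifferentiableAt ℝ v₀ s) (hv₁ : DifferentiableAt ℝ v₁ s)
    (hunit : ∀ᶠ u in 𝓝 s, ‖v₀ u‖ = 1) (horth : ⟪v₀ s, v₁ s⟫ = 0) (harc : ‖deriv v₀ s‖ = 1)
    (t : ℝ) :
    cross (deriv (fun u => F v₀ v₁ u t) s) (deriv (fun u => F v₀ v₁ s u) t) =
      κ₁ v₀ v₁ s • n₀ v₀ s - (t + ⟪deriv (r v₀ v₁) s, deriv (e v₀) s⟫) • t₀ v₀ s := by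
  have hperp : ⟪v₀ s, deriv v₀ s⟫ = 0 :=
    inner_eq_zero_of_hasDerivAt_of_norm_eventually_eq hv₀.hasDerivAt hunit
  have hnormal : ⟪deriv (r v₀ v₁) s + t • deriv v₀ s, t₀ v₀ s⟫ = κ₁ v₀ v₁ s := by
    rw [inner_add_left, inner_deriv_r_t₀ hv₀ hv₁ hunit.self_of_nhds horth hperp,
      real_inner_smul_left, t₀, n₀, inner_cross_self, mul_zero, add_zero]
  have htangent : ⟪deriv (r v₀ v₁) s + t • deriv v₀ s, deriv v₀ s⟫ =
      t + ⟪deriv (r v₀ v₁) s, deriv v₀ s⟫ := by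
    rw [inner_add_left, real_inner_smul_left, inner_self_eq_one_of_norm_eq_one harc, mul_one,
      add_comm]
  rw [deriv_F_left hv₀ hv₁, deriv_F_right, cross_eq_of_orthogonal_unit harc hperp, htangent,
    ← hnormal]
  rfl

/-- For `F(s,t) = r(s) + t • e(s)` one has
`(∂F/∂s) × (∂F/∂t) = κ₁(s) • n₀(s) - (t + ⟪r'(s), e'(s)⟫) • t₀(s)`. -/
theorem cross_of_partials
    (I : Set ℝ) (v₀ v₁ : ℝ → E3)
    (hI : IsOpen I) (hI' : I.OrdConnected)
    (hv₀ : ContDiffOn ℝ (⊤ : ℕ∞) v₀ I) (hv₁ : ContDiffOn ℝ (⊤ : ℕ∞) v₁ I)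
    (hunit : ∀ s ∈ I, ‖v₀ s‖ = 1) (horth : ∀ s ∈ I, ⟪v₀ s, v₁ s⟫ = 0)
    (harc : ∀ s ∈ I, ‖deriv v₀ s‖ = 1) :
    ∀ s ∈ I, ∀ t : ℝ,
      cross (deriv (fun u => F v₀ v₁ u t) s) (deriv (fun u => F v₀ v₁ s u) t) =
        κ₁ v₀ v₁ s • n₀ v₀ s - (t + ⟪deriv (r v₀ v₁) s, deriv (e v₀) s⟫) • t₀ v₀ s := by
  intro s hs
  have hnhds := hI.mem_nhds hs
  exact cross_of_partials_general ((hv₀.contDiffAt hnhds).differentiableAt (by simp))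
    ((hv₁.contDiffAt hnhds).differentiableAt (by simp)) (eventually_of_mem hnhds hunit)
    (horth s hs) (harc s hs)
end
end

section
/- Assume in addition that κ₁(s) = 0 for all s ∈ I (the ruled surface is developable) and that τ₁(s) ≠ 0 for all s ∈ I. Then the striction curve σ is a regular space curve (σ'(s) ≠ 0 for all s), its curvature satisfies |σ'(s) × σ''(s)| / |σ'(s)|³ = 1/|τ₁(s)|, and its torsion satisfies det(σ'(s), σ''(s), σ'''(s)) / |σ'(s) × σ''(s)|² = τ₀(s)/τ₁(s) for all s ∈ I. -/
noncomputable section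
open scoped RealInnerProductSpace

open Ruled

/-!
Write `n₀ = v₀'` and `t₀ = v₀ × n₀`. A cross product of two vectors orthogonal to a unit vector `q`
is a multiple of `q`. Since `n₀` is orthogonal to `v₀`, `v₁'` and `n₀'`, while `v₀` is orthogonal to
`n₀` and `v₁`, this gives

* `r' = n₀ × v₁ + v₀ × v₁' = ⟪v₁, t₀⟫ v₀ - ⟪v₁', t₀⟫ n₀`, so `σ = r + ⟪v₁', t₀⟫ v₀`;
* `t₀' = v₀ × n₀' = -τ₀ n₀`, so `⟪v₁', t₀⟫' = ⟪v₁'', t₀⟫`.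

Hence `σ' = ⟪v₁ + v₁'', t₀⟫ v₀`, and the same expansions identify the coefficient with `τ₁`.
A curve with velocity `g p`, where `p` is a unit-speed curve on the sphere, has curvature `1 / |g|`
and torsion `det(p, p', p'') / g`.
-/

open Set

section DerivativesOnOpenSets

variable {I : Set ℝ} {s : ℝ}

theorem eqOn_deriv_smul {F : Type*} [NormedAddCommGroup F] [NormedSpace ℝ F] {g : ℝ → ℝ}
    {p : ℝ → F} (hI : IsOpen I) (hg : DifferentiableOn ℝ g I) (hp : DifferentiableOn ℝ p I) :
    EqOn (deriv (g • p)) (g • deriv p + deriv g • p) I := fun _ hs =>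
  deriv_smul (hg.differentiableAt (hI.mem_nhds hs)) (hp.differentiableAt (hI.mem_nhds hs))

variable {E : Type*} [NormedAddCommGroup E] [InnerProductSpace ℝ E] {f g : ℝ → E}

theorem inner_deriv_add_inner_deriv_eq_zero {c : ℝ} (hI : IsOpen I) (hf : DifferentiableOn ℝ f I)
    (hg : DifferentiableOn ℝ g I) (hc : ∀ t ∈ I, ⟪f t, g t⟫ = c) (hs : s ∈ I) :
    ⟪f s, deriv g s⟫ + ⟪deriv f s, g s⟫ = 0 := by
  have hsI := hI.mem_nhds hs
  have hconst : EqOn (fun t => ⟪f t, g t⟫) (fun _ => c) I := hc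
  rw [← deriv_inner_apply ℝ (hf.differentiableAt hsI) (hg.differentiableAt hsI),
    hconst.deriv hI hs, deriv_const]

theorem inner_deriv_eq_zero_of_norm_eq {c : ℝ} (hI : IsOpen I) (hf : DifferentiableOn ℝ f I)
    (hc : ∀ t ∈ I, ‖f t‖ = c) (hs : s ∈ I) : ⟪f s, deriv f s⟫ = 0 := by
  have hsq : ∀ t ∈ I, ⟪f t, f t⟫ = c ^ 2 := fun t ht => by
    rw [real_inner_self_eq_norm_sq, hc t ht]
  have hsum := inner_deriv_add_inner_deriv_eq_zero hI hf hf hsq hs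
  rw [real_inner_comm (f s) (deriv f s)] at hsum
  linarith

end DerivativesOnOpenSets

namespace E3

open scoped Matrix

theorem inner_eq_dotProduct (u v : E3) : ⟪u, v⟫ = u.ofLp ⬝ᵥ v.ofLp := by
  rw [EuclideanSpace.inner_eq_star_dotProduct, star_trivial, dotProduct_comm]

theorem cross_eq_toLp_crossProduct (u v : E3) :
    cross u v = WithLp.toLp 2 (u.ofLp ⨯₃ v.ofLp) := rfl

theorem isBilinearMap_cross : IsBilinearMap ℝ cross where
  add_left u v w := by simp [cross_eq_toLp_crossProduct]
  smul_left a u v := by simp [cross_eq_toLp_crossProduct]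
  add_right u v w := by simp [cross_eq_toLp_crossProduct]
  smul_right a u v := by simp [cross_eq_toLp_crossProduct]

theorem cross_zero (u : E3) : cross u 0 = 0 := by
  simp [cross_eq_toLp_crossProduct]

theorem cross_self (u : E3) : cross u u = 0 := by
  simp [cross_eq_toLp_crossProduct]

theorem neg_cross (u v : E3) : -cross u v = cross v u := by
  simp only [cross_eq_toLp_crossProduct, ← WithLp.toLp_neg, cross_anticomm]

theorem inner_self_cross (u v : E3) : ⟪u, cross u v⟫ = 0 := by
  rw [inner_eq_dotProduct, cross_eq_toLp_crossProduct, dot_self_cross]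

theorem inner_cross_self (u v : E3) : ⟪v, cross u v⟫ = 0 := by
  rw [inner_eq_dotProduct, cross_eq_toLp_crossProduct, dot_cross_self]

theorem inner_cross_rotate (u v w : E3) : ⟪u, cross v w⟫ = ⟪v, cross w u⟫ := by
  simp only [inner_eq_dotProduct, cross_eq_toLp_crossProduct]
  exact triple_product_permutation _ _ _

theorem cross_cross_eq_smul_sub_smul (u v w : E3) :
    cross u (cross v w) = ⟪u, w⟫ • v - ⟪v, u⟫ • w := by
  simp only [inner_eq_dotProduct, cross_eq_toLp_crossProduct, cross_cross_eq_smul_sub_smul']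
  rfl

theorem det3_eq_inner_cross (u v w : E3) : det3 u v w = ⟪w, cross u v⟫ := by
  have htranspose : !![u 0, v 0, w 0; u 1, v 1, w 1; u 2, v 2, w 2] =
      (Matrix.of ![u.ofLp, v.ofLp, w.ofLp])ᵀ := by
    ext i j
    fin_cases i <;> fin_cases j <;> rfl
  rw [det3, htranspose, Matrix.det_transpose, inner_cross_rotate, inner_eq_dotProduct,
    cross_eq_toLp_crossProduct]
  exact (triple_product_eq_det _ _ _).symm

theorem norm_cross_of_inner_eq_zero {u v : E3} (h : ⟪u, v⟫ = 0) : ‖cross u v‖ = ‖u‖ * ‖v‖ := by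
  rw [cross_eq_toLp_crossProduct, InnerProductGeometry.norm_ofLp_crossProduct,
    InnerProductGeometry.inner_eq_zero_iff_angle_eq_pi_div_two u v |>.mp h, Real.sin_pi_div_two,
    mul_one]

theorem cross_eq_inner_smul_of_inner_eq_zero {q u v : E3} (hq : ‖q‖ = 1) (hu : ⟪q, u⟫ = 0)
    (hv : ⟪q, v⟫ = 0) : cross u v = ⟪q, cross u v⟫ • q := by
  have hparallel : cross q (cross u v) = 0 := by
    rw [cross_cross_eq_smul_sub_smul, hv, real_inner_comm, hu, zero_smul, zero_smul, sub_zero]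
  have hexpand := cross_cross_eq_smul_sub_smul q q (cross u v)
  rw [hparallel, cross_zero, real_inner_self_eq_norm_sq, hq, one_pow, one_smul] at hexpand
  exact (sub_eq_zero.mp hexpand.symm).symm

theorem hasDerivAt_cross {f g : ℝ → E3} {f' g' : E3} {s : ℝ} (hf : HasDerivAt f f' s)
    (hg : HasDerivAt g g' s) :
    HasDerivAt (fun t => cross (f t) (g t)) (cross (f s) g' + cross f' (g s)) s :=
  isBilinearMap_cross.toContinuousBilinearMap.hasDerivAt_of_bilinear (fun _ => hf) fun _ => hg

theorem contDiffOn_cross {f g : ℝ → E3} {I : Set ℝ} {n : WithTop ℕ∞} (hf : ContDiffOn ℝ n f I)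
    (hg : ContDiffOn ℝ n g I) : ContDiffOn ℝ n (fun t => cross (f t) (g t)) I :=
  isBilinearMap_cross.toContinuousBilinearMap.isBoundedBilinearMap.contDiff.comp_contDiffOn
    (hf.prodMk hg)

/-- The curvature `|γ' × γ''| / |γ'|³` of a space curve in an arbitrary regular parametrization;
it takes the value `0` where `γ' = 0`. -/
def curvature (γ : ℝ → E3) (s : ℝ) : ℝ :=
  ‖cross (deriv γ s) (deriv (deriv γ) s)‖ / ‖deriv γ s‖ ^ 3

/-- The torsion `det(γ', γ'', γ''') / |γ' × γ''|²` of a space curve in an arbitrary regular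
parametrization; it takes the value `0` where `γ' × γ'' = 0`. -/
def torsion (γ : ℝ → E3) (s : ℝ) : ℝ :=
  det3 (deriv γ s) (deriv (deriv γ) s) (deriv (deriv (deriv γ)) s) /
    ‖cross (deriv γ s) (deriv (deriv γ) s)‖ ^ 2

section VelocityEqSMul

variable {I : Set ℝ} {γ p : ℝ → E3} {g : ℝ → ℝ} {s : ℝ}

theorem cross_deriv_deriv_of_deriv_eqOn_smul (hI : IsOpen I) (hg : DifferentiableOn ℝ g I)
    (hp : DifferentiableOn ℝ p I) (hγ : EqOn (deriv γ) (g • p) I) (hs : s ∈ I) :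
    cross (deriv γ s) (deriv (deriv γ) s) = g s ^ 2 • cross (p s) (deriv p s) := by
  rw [hγ hs, hγ.deriv hI hs, eqOn_deriv_smul hI hg hp hs]
  simp only [Pi.add_apply, Pi.smul_apply', isBilinearMap_cross.add_right,
    isBilinearMap_cross.smul_left, isBilinearMap_cross.smul_right, cross_self, smul_zero, add_zero,
    smul_smul, pow_two]

theorem det3_derivs_of_deriv_eqOn_smul (hI : IsOpen I) (hg : ContDiffOn ℝ 2 g I)
    (hp : ContDiffOn ℝ 2 p I) (hγ : EqOn (deriv γ) (g • p) I) (hs : s ∈ I) :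
    det3 (deriv γ s) (deriv (deriv γ) s) (deriv (deriv (deriv γ)) s) =
      g s ^ 3 * det3 (p s) (deriv p s) (deriv (deriv p) s) := by
  have hg₀ := hg.differentiableOn two_ne_zero
  have hp₀ := hp.differentiableOn two_ne_zero
  have hg₁ := (hg.deriv_of_isOpen (m := 1) hI le_rfl).differentiableOn one_ne_zero
  have hp₁ := (hp.deriv_of_isOpen (m := 1) hI le_rfl).differentiableOn one_ne_zero
  have hsI := hI.mem_nhds hs
  have hγ₂ : EqOn (deriv (deriv γ)) (g • deriv p + deriv g • p) I :=
    (hγ.deriv hI).trans (eqOn_deriv_smul hI hg₀ hp₀)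
  have hγ₃ : deriv (deriv (deriv γ)) s = g s • deriv (deriv p) s + deriv g s • deriv p s +
      (deriv g s • deriv p s + deriv (deriv g) s • p s) := by
    rw [hγ₂.deriv hI hs, deriv_add ((hg₀.smul hp₁).differentiableAt hsI)
      ((hg₁.smul hp₀).differentiableAt hsI), eqOn_deriv_smul hI hg₀ hp₁ hs,
      eqOn_deriv_smul hI hg₁ hp₀ hs]
    rfl
  rw [det3_eq_inner_cross, det3_eq_inner_cross,
    cross_deriv_deriv_of_deriv_eqOn_smul hI hg₀ hp₀ hγ hs, hγ₃]
  simp only [inner_add_left, real_inner_smul_left, real_inner_smul_right, inner_self_cross,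
    inner_cross_self]
  ring

theorem curvature_of_deriv_eqOn_smul (hI : IsOpen I) (hg : DifferentiableOn ℝ g I)
    (hp : DifferentiableOn ℝ p I) (hγ : EqOn (deriv γ) (g • p) I) (hs : s ∈ I) (hgs : g s ≠ 0) :
    curvature γ s = ‖cross (p s) (deriv p s)‖ / (|g s| * ‖p s‖ ^ 3) := by
  have hgs' : |g s| ≠ 0 := abs_ne_zero.mpr hgs
  rw [curvature, cross_deriv_deriv_of_deriv_eqOn_smul hI hg hp hγ hs, hγ hs, Pi.smul_apply',
    norm_smul, norm_smul, norm_pow, Real.norm_eq_abs, mul_pow, pow_succ |g s| 2, mul_assoc,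
    mul_div_mul_left _ _ (pow_ne_zero 2 hgs')]

theorem torsion_of_deriv_eqOn_smul (hI : IsOpen I) (hg : ContDiffOn ℝ 2 g I)
    (hp : ContDiffOn ℝ 2 p I) (hγ : EqOn (deriv γ) (g • p) I) (hs : s ∈ I) (hgs : g s ≠ 0) :
    torsion γ s = det3 (p s) (deriv p s) (deriv (deriv p) s) /
      (g s * ‖cross (p s) (deriv p s)‖ ^ 2) := by
  rw [torsion, det3_derivs_of_deriv_eqOn_smul hI hg hp hγ hs,
    cross_deriv_deriv_of_deriv_eqOn_smul hI (hg.differentiableOn two_ne_zero)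
      (hp.differentiableOn two_ne_zero) hγ hs, norm_smul, norm_pow, Real.norm_eq_abs, sq_abs,
    mul_pow, ← mul_div_mul_left _ (g s * _) (pow_ne_zero 3 hgs)]
  ring

end VelocityEqSMul

end E3

namespace Ruled

variable {I : Set ℝ} {v₀ v₁ : ℝ → E3} {s : ℝ}

theorem inner_n₀_deriv_n₀ (hI : IsOpen I) (hv₀ : ContDiffOn ℝ 2 v₀ I)
    (harc : ∀ t ∈ I, ‖deriv v₀ t‖ = 1) (hs : s ∈ I) : ⟪n₀ v₀ s, deriv (n₀ v₀) s⟫ = 0 :=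
  inner_deriv_eq_zero_of_norm_eq hI
    ((hv₀.deriv_of_isOpen (m := 1) hI le_rfl).differentiableOn one_ne_zero) harc hs

theorem inner_v₀_deriv_n₀ (hI : IsOpen I) (hv₀ : ContDiffOn ℝ 2 v₀ I)
    (hunit : ∀ t ∈ I, ‖v₀ t‖ = 1) (harc : ∀ t ∈ I, ‖deriv v₀ t‖ = 1) (hs : s ∈ I) :
    ⟪v₀ s, deriv (n₀ v₀) s⟫ = -1 := by
  have hd₀ := hv₀.differentiableOn two_ne_zero
  have hd₁ := (hv₀.deriv_of_isOpen (m := 1) hI le_rfl).differentiableOn one_ne_zero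
  have hsum := inner_deriv_add_inner_deriv_eq_zero hI hd₀ hd₁
    (fun t ht => inner_deriv_eq_zero_of_norm_eq hI hd₀ hunit ht) hs
  rw [real_inner_self_eq_norm_sq, harc s hs, one_pow] at hsum
  exact eq_neg_of_add_eq_zero_left hsum

theorem cross_n₀_v₁ (hunit : ‖v₀ s‖ = 1) (hn₀ : ⟪v₀ s, n₀ v₀ s⟫ = 0)
    (horth : ⟪v₀ s, v₁ s⟫ = 0) : cross (n₀ v₀ s) (v₁ s) = ⟪v₁ s, t₀ v₀ s⟫ • v₀ s := by
  rw [E3.cross_eq_inner_smul_of_inner_eq_zero hunit hn₀ horth, ← E3.inner_cross_rotate, t₀]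

theorem cross_v₀_of_inner_n₀_eq_zero {w : E3} (harc : ‖n₀ v₀ s‖ = 1)
    (hn₀ : ⟪v₀ s, n₀ v₀ s⟫ = 0) (hw : ⟪n₀ v₀ s, w⟫ = 0) :
    cross (v₀ s) w = -⟪w, t₀ v₀ s⟫ • n₀ v₀ s := by
  rw [real_inner_comm] at hn₀
  rw [E3.cross_eq_inner_smul_of_inner_eq_zero harc hn₀ hw, ← E3.inner_cross_rotate,
    ← E3.neg_cross, inner_neg_right, t₀]

theorem hasDerivAt_r_s9 (hv₀ : DifferentiableAt ℝ v₀ s) (hv₁ : DifferentiableAt ℝ v₁ s)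
    (hunit : ‖v₀ s‖ = 1) (harc : ‖deriv v₀ s‖ = 1) (hn₀ : ⟪v₀ s, n₀ v₀ s⟫ = 0)
    (horth : ⟪v₀ s, v₁ s⟫ = 0) (hdev : κ₁ v₀ v₁ s = 0) :
    HasDerivAt (r v₀ v₁) (⟪v₁ s, t₀ v₀ s⟫ • v₀ s - ⟪deriv v₁ s, t₀ v₀ s⟫ • n₀ v₀ s) s := by
  refine (E3.hasDerivAt_cross hv₀.hasDerivAt hv₁.hasDerivAt).congr_deriv ?_
  have hcross : cross (deriv v₀ s) (v₁ s) = ⟪v₁ s, t₀ v₀ s⟫ • v₀ s :=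
    cross_n₀_v₁ hunit hn₀ horth
  rw [hcross, cross_v₀_of_inner_n₀_eq_zero harc hn₀ hdev, neg_smul, neg_add_eq_sub]

theorem hasDerivAt_t₀ (hv₀ : DifferentiableAt ℝ v₀ s) (hn₀ : DifferentiableAt ℝ (n₀ v₀) s)
    (harc : ‖n₀ v₀ s‖ = 1) (hv₀n₀ : ⟪v₀ s, n₀ v₀ s⟫ = 0)
    (hn₀n₀' : ⟪n₀ v₀ s, deriv (n₀ v₀) s⟫ = 0) :
    HasDerivAt (t₀ v₀) (-τ₀ v₀ s • n₀ v₀ s) s := by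
  refine (E3.hasDerivAt_cross hv₀.hasDerivAt hn₀.hasDerivAt).congr_deriv ?_
  rw [cross_v₀_of_inner_n₀_eq_zero harc hv₀n₀ hn₀n₀', n₀, E3.cross_self, add_zero, τ₀]

theorem contDiffOn_t₀ {n : WithTop ℕ∞} (hI : IsOpen I) (hv₀ : ContDiffOn ℝ (n + 1) v₀ I) :
    ContDiffOn ℝ n (t₀ v₀) I :=
  E3.contDiffOn_cross (hv₀.of_le le_self_add) (hv₀.deriv_of_isOpen hI le_rfl)

theorem eqOn_n₁_deriv (hdev : ∀ t ∈ I, κ₁ v₀ v₁ t = 0) : EqOn (n₁ v₀ v₁) (deriv v₁) I :=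
  fun t ht => by rw [n₁, hdev t ht, zero_smul, sub_zero]

theorem eqOn_strict_r_add_smul (hI : IsOpen I) (hv₀ : DifferentiableOn ℝ v₀ I)
    (hv₁ : DifferentiableOn ℝ v₁ I) (hunit : ∀ t ∈ I, ‖v₀ t‖ = 1)
    (horth : ∀ t ∈ I, ⟪v₀ t, v₁ t⟫ = 0) (harc : ∀ t ∈ I, ‖deriv v₀ t‖ = 1)
    (hdev : ∀ t ∈ I, κ₁ v₀ v₁ t = 0) :
    EqOn (strict v₀ v₁) (fun t => r v₀ v₁ t + ⟪deriv v₁ t, t₀ v₀ t⟫ • v₀ t) I := by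
  intro t ht
  have htI := hI.mem_nhds ht
  have hn₀ : ⟪v₀ t, n₀ v₀ t⟫ = 0 := inner_deriv_eq_zero_of_norm_eq hI hv₀ hunit ht
  have hr := hasDerivAt_r_s9 (hv₀.differentiableAt htI) (hv₁.differentiableAt htI) (hunit t ht)
    (harc t ht) hn₀ (horth t ht) (hdev t ht)
  have hinner : ⟪deriv (r v₀ v₁) t, n₀ v₀ t⟫ = -⟪deriv v₁ t, t₀ v₀ t⟫ := by
    rw [hr.deriv, inner_sub_left, real_inner_smul_left, real_inner_smul_left, hn₀,
      real_inner_self_eq_norm_sq, n₀, harc t ht]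
    ring
  change r v₀ v₁ t - ⟪deriv (r v₀ v₁) t, n₀ v₀ t⟫ • v₀ t = _
  rw [hinner, neg_smul, sub_neg_eq_add]

theorem eqOn_τ₁_inner_t₀ (hI : IsOpen I) (hv₀ : ContDiffOn ℝ 2 v₀ I) (hunit : ∀ t ∈ I, ‖v₀ t‖ = 1)
    (horth : ∀ t ∈ I, ⟪v₀ t, v₁ t⟫ = 0) (harc : ∀ t ∈ I, ‖deriv v₀ t‖ = 1)
    (hdev : ∀ t ∈ I, κ₁ v₀ v₁ t = 0) :
    EqOn (τ₁ v₀ v₁) (fun t => ⟪v₁ t + deriv (deriv v₁) t, t₀ v₀ t⟫) I := by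
  intro t ht
  have hn₀ : ⟪v₀ t, n₀ v₀ t⟫ = 0 :=
    inner_deriv_eq_zero_of_norm_eq hI (hv₀.differentiableOn two_ne_zero) hunit ht
  have hn₀'n₀ : ⟪deriv (n₀ v₀) t, n₀ v₀ t⟫ = 0 :=
    (real_inner_comm _ _).trans (inner_n₀_deriv_n₀ hI hv₀ harc ht)
  have hn₀'v₀ : ⟪deriv (n₀ v₀) t, v₀ t⟫ = -1 :=
    (real_inner_comm _ _).trans (inner_v₀_deriv_n₀ hI hv₀ hunit harc ht)
  have ht₁ : t₁ v₀ v₁ t = -⟪deriv v₁ t, t₀ v₀ t⟫ • n₀ v₀ t - ⟪v₁ t, t₀ v₀ t⟫ • v₀ t := by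
    rw [t₁, eqOn_n₁_deriv hdev ht, cross_v₀_of_inner_n₀_eq_zero (harc t ht) hn₀ (hdev t ht),
      ← E3.neg_cross (n₀ v₀ t), cross_n₀_v₁ (hunit t ht) hn₀ (horth t ht), sub_eq_add_neg]
  rw [τ₁, (eqOn_n₁_deriv hdev).deriv hI ht, ht₁, inner_sub_right, real_inner_smul_right,
    real_inner_smul_right, hn₀'n₀, hn₀'v₀]
  simp only [inner_add_left]
  ring

theorem contDiffOn_τ₁ {n : WithTop ℕ∞} (hn : 1 ≤ n) (hI : IsOpen I)
    (hv₀ : ContDiffOn ℝ (n + 1) v₀ I) (hv₁ : ContDiffOn ℝ (n + 1 + 1) v₁ I)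
    (hunit : ∀ t ∈ I, ‖v₀ t‖ = 1) (horth : ∀ t ∈ I, ⟪v₀ t, v₁ t⟫ = 0)
    (harc : ∀ t ∈ I, ‖deriv v₀ t‖ = 1) (hdev : ∀ t ∈ I, κ₁ v₀ v₁ t = 0) :
    ContDiffOn ℝ n (τ₁ v₀ v₁) I := by
  have hv₁'' : ContDiffOn ℝ n (deriv (deriv v₁)) I :=
    (hv₁.deriv_of_isOpen hI le_rfl).deriv_of_isOpen hI le_rfl
  have hv₀₂ : ContDiffOn ℝ 2 v₀ I := hv₀.of_le (one_add_one_eq_two.symm.trans_le (by gcongr))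
  refine ContDiffOn.congr ?_ (eqOn_τ₁_inner_t₀ hI hv₀₂ hunit horth harc hdev)
  exact ((hv₁.of_le (le_self_add.trans le_self_add)).add hv₁'').inner ℝ (contDiffOn_t₀ hI hv₀)

theorem hasDerivAt_inner_deriv_v₁_t₀ (hI : IsOpen I) (hv₀ : ContDiffOn ℝ 2 v₀ I)
    (hv₁ : DifferentiableAt ℝ (deriv v₁) s) (hunit : ∀ t ∈ I, ‖v₀ t‖ = 1)
    (harc : ∀ t ∈ I, ‖deriv v₀ t‖ = 1) (hs : s ∈ I) (hdev : κ₁ v₀ v₁ s = 0) :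
    HasDerivAt (fun t => ⟪deriv v₁ t, t₀ v₀ t⟫) ⟪deriv (deriv v₁) s, t₀ v₀ s⟫ s := by
  have hsI := hI.mem_nhds hs
  have hd₀ := hv₀.differentiableOn two_ne_zero
  have hd₁ := (hv₀.deriv_of_isOpen (m := 1) hI le_rfl).differentiableOn one_ne_zero
  have ht₀ := hasDerivAt_t₀ (hd₀.differentiableAt hsI) (hd₁.differentiableAt hsI) (harc s hs)
    (inner_deriv_eq_zero_of_norm_eq hI hd₀ hunit hs) (inner_n₀_deriv_n₀ hI hv₀ harc hs)
  have hv₁n₀ : ⟪deriv v₁ s, n₀ v₀ s⟫ = 0 := (real_inner_comm _ _).trans hdev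
  refine (hv₁.hasDerivAt.inner ℝ ht₀).congr_deriv ?_
  rw [real_inner_smul_right, hv₁n₀, mul_zero, zero_add]

theorem eqOn_deriv_strict_smul (hI : IsOpen I) (hv₀ : ContDiffOn ℝ 2 v₀ I)
    (hv₁ : ContDiffOn ℝ 2 v₁ I) (hunit : ∀ t ∈ I, ‖v₀ t‖ = 1)
    (horth : ∀ t ∈ I, ⟪v₀ t, v₁ t⟫ = 0) (harc : ∀ t ∈ I, ‖deriv v₀ t‖ = 1)
    (hdev : ∀ t ∈ I, κ₁ v₀ v₁ t = 0) :
    EqOn (deriv (strict v₀ v₁)) (τ₁ v₀ v₁ • v₀) I := by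
  intro t ht
  have htI := hI.mem_nhds ht
  have hd₀ := hv₀.differentiableOn two_ne_zero
  have hd₁ := hv₁.differentiableOn two_ne_zero
  have hd₁' := (hv₁.deriv_of_isOpen (m := 1) hI le_rfl).differentiableOn one_ne_zero
  have hr := hasDerivAt_r_s9 (hd₀.differentiableAt htI) (hd₁.differentiableAt htI) (hunit t ht)
    (harc t ht) (inner_deriv_eq_zero_of_norm_eq hI hd₀ hunit ht) (horth t ht) (hdev t ht)
  have hcoeff := hasDerivAt_inner_deriv_v₁_t₀ hI hv₀ (hd₁'.differentiableAt htI) hunit harc ht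
    (hdev t ht)
  have hσ := hr.add (hcoeff.smul (hd₀.differentiableAt htI).hasDerivAt)
  rw [(eqOn_strict_r_add_smul hI hd₀ hd₁ hunit horth harc hdev).deriv hI ht, Pi.smul_apply',
    eqOn_τ₁_inner_t₀ hI hv₀ hunit horth harc hdev ht]
  refine hσ.deriv.trans ?_
  simp only [n₀, inner_add_left, add_smul]
  abel

end Ruled

theorem striction_curve_curvature_torsion_general {I : Set ℝ} {v₀ v₁ : ℝ → E3} {s : ℝ}
    (hI : IsOpen I) (hv₀ : ContDiffOn ℝ 3 v₀ I) (hv₁ : ContDiffOn ℝ 4 v₁ I)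
    (hunit : ∀ t ∈ I, ‖v₀ t‖ = 1) (horth : ∀ t ∈ I, ⟪v₀ t, v₁ t⟫ = 0)
    (harc : ∀ t ∈ I, ‖deriv v₀ t‖ = 1) (hdev : ∀ t ∈ I, κ₁ v₀ v₁ t = 0)
    (hs : s ∈ I) (hτ : τ₁ v₀ v₁ s ≠ 0) :
    deriv (strict v₀ v₁) s ≠ 0 ∧
      E3.curvature (strict v₀ v₁) s = 1 / |τ₁ v₀ v₁ s| ∧
      E3.torsion (strict v₀ v₁) s = τ₀ v₀ s / τ₁ v₀ v₁ s := by
  have hv₀₂ : ContDiffOn ℝ 2 v₀ I := hv₀.of_le (by norm_num)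
  have hd₀ := hv₀₂.differentiableOn two_ne_zero
  have hσ : EqOn (deriv (strict v₀ v₁)) (τ₁ v₀ v₁ • v₀) I :=
    eqOn_deriv_strict_smul hI hv₀₂ (hv₁.of_le (by norm_num)) hunit horth harc hdev
  have hτ₁ : ContDiffOn ℝ 2 (τ₁ v₀ v₁) I :=
    contDiffOn_τ₁ one_le_two hI hv₀ hv₁ hunit horth harc hdev
  have ht₀ : ‖cross (v₀ s) (deriv v₀ s)‖ = 1 := by
    rw [E3.norm_cross_of_inner_eq_zero (inner_deriv_eq_zero_of_norm_eq hI hd₀ hunit hs),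
      hunit s hs, harc s hs, one_mul]
  have hv₀s : v₀ s ≠ 0 := norm_ne_zero_iff.mp (by simp [hunit s hs])
  refine ⟨hσ hs ▸ smul_ne_zero hτ hv₀s, ?_, ?_⟩
  · rw [E3.curvature_of_deriv_eqOn_smul hI (hτ₁.differentiableOn two_ne_zero) hd₀ hσ hs hτ, ht₀,
      hunit s hs, one_pow, mul_one]
  · rw [E3.torsion_of_deriv_eqOn_smul hI hτ₁ hv₀₂ hσ hs hτ, ht₀, one_pow, mul_one,
      E3.det3_eq_inner_cross]
    rfl

/-- For a non-cylindrical developable surface with `τ₁ ≠ 0`, the striction curve is a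
regular space curve with curvature `1/|τ₁|` and torsion `τ₀/τ₁`. -/
theorem striction_curve_curvature_torsion
    (I : Set ℝ) (v₀ v₁ : ℝ → E3)
    (hI : IsOpen I) (hI' : I.OrdConnected)
    (hv₀ : ContDiffOn ℝ (⊤ : ℕ∞) v₀ I) (hv₁ : ContDiffOn ℝ (⊤ : ℕ∞) v₁ I)
    (hunit : ∀ s ∈ I, ‖v₀ s‖ = 1) (horth : ∀ s ∈ I, ⟪v₀ s, v₁ s⟫ = 0)
    (harc : ∀ s ∈ I, ‖deriv v₀ s‖ = 1)
    (hdev : ∀ s ∈ I, κ₁ v₀ v₁ s = 0) (hτ : ∀ s ∈ I, τ₁ v₀ v₁ s ≠ 0) :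
    ∀ s ∈ I,
      deriv (strict v₀ v₁) s ≠ 0 ∧
      ‖cross (deriv (strict v₀ v₁) s) (deriv (deriv (strict v₀ v₁)) s)‖ /
          ‖deriv (strict v₀ v₁) s‖ ^ 3 = 1 / |τ₁ v₀ v₁ s| ∧
      det3 (deriv (strict v₀ v₁) s) (deriv (deriv (strict v₀ v₁)) s)
            (deriv (deriv (deriv (strict v₀ v₁))) s) /
          ‖cross (deriv (strict v₀ v₁) s) (deriv (deriv (strict v₀ v₁)) s)‖ ^ 2 =
        τ₀ v₀ s / τ₁ v₀ v₁ s :=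
  fun _ hs => striction_curve_curvature_torsion_general hI (contDiffOn_infty.mp hv₀ 3)
    (contDiffOn_infty.mp hv₁ 4) hunit horth harc hdev hs (hτ _ hs)
end
end
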